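/- Let Σ be a signed graph and e an edge of Σ. There is a negative circle of Σ containing e if and only if the block of Σ containing e is unbalanced. -/

import Mathlib

/-- The sign of a walk in a signed graph: the product of the signs of its edges. -/
def walkSign {V : Type*} (G : SimpleGraph V) (σ : Sym2 V → ℤˣ) {u v : V}
    (w : G.Walk u v) : ℤˣ :=
  (w.edges.map σ).prod

/-- A set of vertices induces an inseparable subgraph: the induced subgraph is connected
and remains connected after deleting any one of its vertices (no cutpoint). -/
def inseparableOn {V : Type*} (G : SimpleGraph V) (S : Set V) : Prop :=
  (G.induce S).Connected ∧ ∀ v ∈ S, (G.induce (S \ {v})).Connected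

/-- `S` is (the vertex set of) a block of `G`: a maximal inseparable subgraph. -/
def isBlock {V : Type*} (G : SimpleGraph V) (S : Set V) : Prop :=
  inseparableOn G S ∧ ∀ T : Set V, S ⊆ T → inseparableOn G T → T = S

/-- The signed graph restricted to `S` (e.g. a block) is balanced: every circle lying
within `S` is positive. -/
def balancedOn {V : Type*} (G : SimpleGraph V) (σ : Sym2 V → ℤˣ) (S : Set V) : Prop :=
  ∀ ⦃a : V⦄ (w : G.Walk a a), w.IsCycle → (∀ x ∈ w.support, x ∈ S) →
    walkSign G σ w = 1

/-!
A circle sharing an edge with a block spans, together with the block, an inseparable subgraph; by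
maximality it lies in the block, which is therefore unbalanced if the circle is negative.

Conversely, let `C` be a negative circle through `u` in an inseparable subgraph and let `uv` be an
edge there. Deleting `u` leaves a connected graph, so `uv` extends to an ear of `C`. The two arcs
of `C` and the ear form a theta graph, in which the product of the signs of the three circles is
`1`; as `C` is negative, so is one of the two circles through the ear. Thus being negative can be
passed on to a circle through `uv`, hence through `v`, and along a walk to any prescribed edge.
-/

section

open SimpleGraph

variable {V : Type*} {G : SimpleGraph V} {σ : Sym2 V → ℤˣ} {S T : Set V} {a b u v w : V}

lemma inseparableOn.preconnected_sdiff_singleton (hS : inseparableOn G S) (x : V) :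
    (G.induce (S \ {x})).Preconnected := by
  by_cases hx : x ∈ S
  · exact (hS.2 x hx).preconnected
  · rw [Set.sdiff_singleton_eq_self hx]
    exact hS.1.preconnected

lemma inseparableOn.union (hS : inseparableOn G S) (hT : inseparableOn G T)
    (hST : (S ∩ T).Nontrivial) : inseparableOn G (S ∪ T) := by
  refine ⟨induce_union_connected hS.1.preconnected hT.1.preconnected hST.nonempty, fun x _ ↦ ?_⟩
  rw [Set.union_sdiff_distrib]
  obtain ⟨y, hy, hyx⟩ := hST.exists_ne x
  exact induce_union_connected (hS.preconnected_sdiff_singleton x)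
    (hT.preconnected_sdiff_singleton x) ⟨y, ⟨hy.1, hyx⟩, hy.2, hyx⟩

lemma isBlock.subset_of_inter_nontrivial (hS : isBlock G S) (hT : inseparableOn G T)
    (hST : (S ∩ T).Nontrivial) : T ⊆ S :=
  Set.union_eq_left.mp (hS.2 _ Set.subset_union_left (hS.1.union hT hST))

lemma support_sdiff_singleton_end {p : G.Walk u v} (hp : p.IsPath) (hnil : ¬ p.Nil) :
    {x | x ∈ p.support} \ {v} = {x | x ∈ p.dropLast.support} := by
  have hsupport : p.support = p.dropLast.support ++ [v] := by
    rw [Walk.support_dropLast hnil, Walk.dropLast_support_concat]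
  have hv : v ∉ p.dropLast.support := by
    have := hp.support_nodup
    rw [hsupport] at this
    grind
  ext x
  simp only [hsupport, Set.mem_sdiff, Set.mem_ofPred_eq, Set.mem_singleton_iff]
  grind

lemma inseparableOn_support_of_isCycle {C : G.Walk a a} (hC : C.IsCycle) :
    inseparableOn G {x | x ∈ C.support} := by
  classical
  refine ⟨C.connected_induce_support, fun x hx ↦ ?_⟩
  have hD : (C.rotate x hx).IsCycle := hC.rotate hx
  have htail : {y | y ∈ C.support} = {y | y ∈ (C.rotate x hx).tail.support} := by
    ext y
    rw [Set.mem_ofPred_eq, Set.mem_ofPred_eq, ← C.mem_support_rotate_iff x hx,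
      ← Walk.cons_support_tail hD.not_nil, List.mem_cons, or_iff_right_of_imp]
    rintro rfl
    exact Walk.end_mem_support _
  have hnil : ¬ (C.rotate x hx).tail.Nil := by
    have := hD.three_le_length
    grind [Walk.not_nil_iff_lt_length, Walk.length_tail_add_one]
  rw [htail, support_sdiff_singleton_end hD.isPath_tail hnil]
  exact Walk.connected_induce_support _

lemma isBlock.support_subset (hS : isBlock G S) (hu : u ∈ S) (hv : v ∈ S) {C : G.Walk a a}
    (hC : C.IsCycle) (huv : s(u, v) ∈ C.edges) : ∀ x ∈ C.support, x ∈ S :=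
  hS.subset_of_inter_nontrivial (inseparableOn_support_of_isCycle hC)
    ⟨u, ⟨hu, C.fst_mem_support_of_mem_edges huv⟩, v, ⟨hv, C.snd_mem_support_of_mem_edges huv⟩,
      (C.adj_of_mem_edges huv).ne⟩

lemma walkSign_append (p : G.Walk u v) (q : G.Walk v w) :
    walkSign G σ (p.append q) = walkSign G σ p * walkSign G σ q := by
  simp [walkSign, Walk.edges_append]

lemma walkSign_reverse (p : G.Walk u v) : walkSign G σ p.reverse = walkSign G σ p := by
  simp [walkSign, Walk.edges_reverse, List.prod_reverse]

lemma walkSign_rotate [DecidableEq V] (p : G.Walk u u) (hv : v ∈ p.support) :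
    walkSign G σ (p.rotate v hv) = walkSign G σ p :=
  ((p.rotate_edges v hv).perm.map σ).prod_eq

lemma walkSign_append_reverse_mul_walkSign_append (p q : G.Walk u v) (r : G.Walk v u) :
    walkSign G σ (p.append q.reverse) * walkSign G σ (p.append r) = walkSign G σ (q.append r) := by
  simp only [walkSign_append, walkSign_reverse]
  rw [mul_mul_mul_comm, Int.units_mul_self, one_mul]

lemma walk_eq_of_length_le_one {p q : G.Walk u v} (hp : p.length ≤ 1) (hq : q.length ≤ 1) :
    p = q := by
  rcases p with _ | ⟨_, _ | _⟩ <;> rcases q with _ | ⟨_, _ | _⟩ <;>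
    grind [G.irrefl, Walk.length_cons]

lemma isCycle_append_of_walkSign_eq_neg_one {p : G.Walk u v} {q : G.Walk v u} (hp : p.IsPath)
    (hq : q.IsPath) (hpq : ∀ x ∈ p.support, x ∈ q.support → x = u ∨ x = v)
    (hneg : walkSign G σ (p.append q) = -1) : (p.append q).IsCycle := by
  refine hp.isCycle_append hq ?_ ?_
  · have hu := p.cons_tail_support ▸ hp.support_nodup
    have hv := q.cons_tail_support ▸ hq.support_nodup
    intro x hxp hxq
    rcases hpq x (List.mem_of_mem_tail hxp) (List.mem_of_mem_tail hxq) with rfl | rfl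
    · exact hu.notMem hxp
    · exact hv.notMem hxq
  · -- Otherwise `q` retraces `p`, and the closed walk has sign `1`.
    by_contra! hlen
    have hqp : q = p.reverse := walk_eq_of_length_le_one hlen.2 (by simpa using hlen.1)
    rw [hqp, walkSign_append, walkSign_reverse, Int.units_mul_self] at hneg
    exact absurd hneg (by decide)

lemma exists_isCycle_append_of_walkSign_eq_neg_one {C : G.Walk u u} (hC : C.IsCycle)
    (hneg : walkSign G σ C = -1) (hv : v ∈ C.support) (hvu : v ≠ u) {p : G.Walk u v}
    (hp : p.IsPath) (hpC : ∀ x ∈ p.support, x ∈ C.support → x = u ∨ x = v) :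
    ∃ q : G.Walk v u, (∀ x ∈ q.support, x ∈ C.support) ∧ (p.append q).IsCycle ∧
      walkSign G σ (p.append q) = -1 := by
  classical
  let r := C.takeUntil v hv
  let s := C.dropUntil v hv
  have hrs : r.append s = C := C.take_spec hv
  have hr : r.IsPath := hC.isPath_takeUntil hv
  have hs : s.IsPath := (hrs ▸ hC).isPath_of_append_right (Walk.not_nil_of_ne hvu.symm)
  have hrC : ∀ x ∈ r.reverse.support, x ∈ C.support := by
    simpa using fun x hx ↦ C.support_takeUntil_subset_support hv hx
  have hsC : ∀ x ∈ s.support, x ∈ C.support := C.support_dropUntil_subset_support hv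
  have htheta : walkSign G σ (p.append r.reverse) * walkSign G σ (p.append s) = -1 := by
    rw [walkSign_append_reverse_mul_walkSign_append, hrs, hneg]
  have hclose {q : G.Walk v u} (hq : q.IsPath) (hqC : ∀ x ∈ q.support, x ∈ C.support) :=
    isCycle_append_of_walkSign_eq_neg_one (σ := σ) hp hq fun x hxp hxq ↦ hpC x hxp (hqC x hxq)
  rcases Int.units_eq_one_or (walkSign G σ (p.append r.reverse)) with hpos | hneg'
  · rw [hpos, one_mul] at htheta
    exact ⟨s, hsC, hclose hs hsC htheta, htheta⟩
  · exact ⟨r.reverse, hrC, hclose hr.reverse hrC hneg', hneg'⟩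

lemma exists_isPath_of_preconnected_induce (hS : (G.induce S).Preconnected) (hu : u ∈ S)
    (hv : v ∈ S) : ∃ p : G.Walk u v, p.IsPath ∧ ∀ x ∈ p.support, x ∈ S := by
  obtain ⟨p, hp⟩ := hS.exists_isPath ⟨u, hu⟩ ⟨v, hv⟩
  refine ⟨p.map (Embedding.induce S).toHom, hp.map Subtype.val_injective, fun x hx ↦ ?_⟩
  obtain ⟨y, -, rfl⟩ := List.mem_map.mp (Walk.support_map _ p ▸ hx)
  exact y.2

lemma exists_isPath_first_mem {p : G.Walk u v} (hp : p.IsPath) (hv : v ∈ T) :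
    ∃ w ∈ T, ∃ q : G.Walk u w, q.IsPath ∧ (∀ x ∈ q.support, x ∈ p.support) ∧
      ∀ x ∈ q.support, x ∈ T → x = w := by
  classical
  obtain ⟨w, hwT, hwp, hw⟩ := p.exists_mem_support_forall_mem_support_imp_eq
    {x ∈ p.support.toFinset | x ∈ T} ⟨v, by simp [hv]⟩
  refine ⟨w, by simp_all, p.takeUntil w hwp, hp.takeUntil hwp,
    p.support_takeUntil_subset_support hwp, fun x hx hxT ↦ hw x ?_ hx⟩
  simpa [hxT] using p.support_takeUntil_subset_support hwp hx

lemma inseparableOn.exists_ear (hS : inseparableOn G S) (hTS : T ⊆ S) (hT : T.Nontrivial)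
    (hu : u ∈ S) (hv : v ∈ S) (huv : G.Adj u v) :
    ∃ w ∈ T, w ≠ u ∧ ∃ p : G.Walk u w, p.IsPath ∧ s(u, v) ∈ p.edges ∧ (∀ x ∈ p.support, x ∈ S) ∧
      ∀ x ∈ p.support, x ∈ T → x = u ∨ x = w := by
  obtain ⟨c, hcT, hcu⟩ := hT.exists_ne u
  obtain ⟨r, hr, hrS⟩ := exists_isPath_of_preconnected_induce (hS.preconnected_sdiff_singleton u)
    (u := v) (v := c) ⟨hv, huv.ne'⟩ ⟨hTS hcT, hcu⟩
  obtain ⟨w, hwT, q, hq, hqr, hqT⟩ := exists_isPath_first_mem hr hcT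
  have hqS : ∀ x ∈ q.support, x ∈ S \ {u} := fun x hx ↦ hrS x (hqr x hx)
  refine ⟨w, hwT, (hqS w q.end_mem_support).2, q.cons huv, hq.cons fun hu ↦ (hqS u hu).2 rfl,
    by simp, ?_, ?_⟩
  · simpa [hu] using fun x hx ↦ (hqS x hx).1
  · simpa using fun x hx hxT ↦ Or.inr (hqT x hx hxT)

/-- `C` is a negative circle of `(G, σ)` whose vertices all lie in `S`. As `C` is a closed walk, it
comes with a base point, which `IsNegCycleIn.rotate` moves. -/
structure IsNegCycleIn (G : SimpleGraph V) (σ : Sym2 V → ℤˣ) (S : Set V) (C : G.Walk a a) :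
    Prop where
  isCycle : C.IsCycle
  support_subset : ∀ x ∈ C.support, x ∈ S
  walkSign_eq : walkSign G σ C = -1

lemma not_balancedOn_iff :
    ¬ balancedOn G σ S ↔ ∃ (a : V) (C : G.Walk a a), IsNegCycleIn G σ S C := by
  simp only [balancedOn, not_forall]
  constructor
  · rintro ⟨a, C, hC, hCS, hneg⟩
    exact ⟨a, C, hC, hCS, (Int.units_eq_one_or _).resolve_left hneg⟩
  · rintro ⟨a, C, hC, hCS, hneg⟩
    exact ⟨a, C, hC, hCS, by simp [hneg]⟩

lemma IsNegCycleIn.rotate [DecidableEq V] {C : G.Walk a a} (hC : IsNegCycleIn G σ S C)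
    (hb : b ∈ C.support) : IsNegCycleIn G σ S (C.rotate b hb) where
  isCycle := hC.isCycle.rotate hb
  support_subset x hx := hC.support_subset x ((Walk.mem_support_rotate_iff ..).mp hx)
  walkSign_eq := (walkSign_rotate C hb).trans hC.walkSign_eq

lemma IsNegCycleIn.exists_mem_edges {C : G.Walk u u} (hC : IsNegCycleIn G σ S C)
    (hS : inseparableOn G S) (hv : v ∈ S) (huv : G.Adj u v) :
    ∃ D : G.Walk u u, IsNegCycleIn G σ S D ∧ s(u, v) ∈ D.edges := by
  have hu : u ∈ S := hC.support_subset u C.start_mem_support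
  have hnontrivial : {x | x ∈ C.support}.Nontrivial :=
    ⟨u, C.start_mem_support, C.snd, C.getVert_mem_support 1,
      (C.adj_snd hC.isCycle.not_nil).ne⟩
  obtain ⟨w, hwC, hwu, p, hp, huvp, hpS, hpC⟩ :=
    hS.exists_ear hC.support_subset hnontrivial hu hv huv
  obtain ⟨q, hqC, hD, hneg⟩ :=
    exists_isCycle_append_of_walkSign_eq_neg_one hC.isCycle hC.walkSign_eq hwC hwu hp hpC
  refine ⟨p.append q, ⟨hD, fun x hx ↦ ?_, hneg⟩, by simp [huvp]⟩
  exact ((p.mem_support_append_iff q).mp hx).elim (hpS x)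
    fun hxq ↦ hC.support_subset x (hqC x hxq)

lemma IsNegCycleIn.exists_of_walk {C : G.Walk a a} (hC : IsNegCycleIn G σ S C)
    (hS : inseparableOn G S) (p : G.Walk a b) (hp : ∀ x ∈ p.support, x ∈ S) :
    ∃ D : G.Walk b b, IsNegCycleIn G σ S D := by
  classical
  induction p with
  | nil => exact ⟨C, hC⟩
  | cons h p ih =>
    have hpS : ∀ x ∈ p.support, x ∈ S := fun x hx ↦ hp x (List.mem_cons_of_mem _ hx)
    obtain ⟨D, hD, he⟩ := hC.exists_mem_edges hS (hpS _ p.start_mem_support) h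
    exact ih (hD.rotate (D.snd_mem_support_of_mem_edges he)) hpS

lemma inseparableOn.exists_isNegCycleIn_mem_edges (hS : inseparableOn G S)
    (hneg : ¬ balancedOn G σ S) (hu : u ∈ S) (hv : v ∈ S) (huv : G.Adj u v) :
    ∃ C : G.Walk u u, IsNegCycleIn G σ S C ∧ s(u, v) ∈ C.edges := by
  obtain ⟨a, C, hC⟩ := not_balancedOn_iff.mp hneg
  obtain ⟨p, -, hp⟩ := exists_isPath_of_preconnected_induce hS.1.preconnected
    (hC.support_subset a C.start_mem_support) hu
  obtain ⟨D, hD⟩ := hC.exists_of_walk hS p hp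
  exact hD.exists_mem_edges hS hv huv

theorem edge_in_negative_circle_iff_block_unbalanced_general (G : SimpleGraph V)
    (σ : Sym2 V → ℤˣ) (huv : G.Adj u v) (S : Set V) (hS : isBlock G S) (hu : u ∈ S) (hv : v ∈ S) :
    (∃ (a : V) (w : G.Walk a a), w.IsCycle ∧ s(u, v) ∈ w.edges ∧ walkSign G σ w = -1) ↔
      ¬ balancedOn G σ S := by
  constructor
  · rintro ⟨a, C, hC, he, hneg⟩
    exact not_balancedOn_iff.mpr ⟨a, C, hC, hS.support_subset hu hv hC he, hneg⟩
  · intro hneg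
    obtain ⟨C, hC, he⟩ := hS.1.exists_isNegCycleIn_mem_edges hneg hu hv huv
    exact ⟨u, C, hC.isCycle, he, hC.walkSign_eq⟩

end

/-- An edge of a signed graph lies in a negative circle iff the block containing it is
unbalanced. -/
theorem edge_in_negative_circle_iff_block_unbalanced {V : Type*} [Fintype V]
    (G : SimpleGraph V) (σ : Sym2 V → ℤˣ) {u v : V} (huv : G.Adj u v)
    (S : Set V) (hS : isBlock G S) (hu : u ∈ S) (hv : v ∈ S) :
    (∃ (a : V) (w : G.Walk a a), w.IsCycle ∧ s(u, v) ∈ w.edges ∧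
        walkSign G σ w = -1) ↔
      ¬ balancedOn G σ S :=
  edge_in_negative_circle_iff_block_unbalanced_general G σ huv S hS hu hv
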